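/- Let H ∈ ℝ^{d×d} be a symmetric matrix, let S ∈ ℝ^{l×d}, and let ŝ ∈ ℝ^l with Sᵀŝ ≠ 0. Let α > 0, κ_S ≥ 0, S_max > 0 and ε_H > 0. Assume: (a) ‖S‖ ≤ S_max; (b) the smallest eigenvalue of the symmetric matrix S H Sᵀ satisfies λ_min(S H Sᵀ) < −ε_H; (c) for every y ∈ ℝ^l, ⟨y, S H Sᵀ y⟩ + (1/α)·[ ‖Sᵀŝ‖^{-1}·⟨S Sᵀŝ, y⟩² + ‖Sᵀŝ‖·‖Sᵀy‖² ] ≥ −κ_S·‖Sᵀŝ‖·‖y‖². Then ‖Sᵀŝ‖ ≥ ε_H·( 2·S_max²/α + κ_S )^{-1}. -/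

import Mathlib

open scoped BigOperators NNReal
open MeasureTheory ProbabilityTheory

namespace RARC

noncomputable def enorm {n : ℕ} (v : Fin n → ℝ) : ℝ := Real.sqrt (∑ i, v i ^ 2)

noncomputable def opNorm {m n : ℕ} (S : Matrix (Fin m) (Fin n) ℝ) : ℝ :=
  sSup {c : ℝ | ∃ v : Fin n → ℝ, enorm v = 1 ∧ c = enorm (S.mulVec v)}

noncomputable def grad {n : ℕ} (f : (Fin n → ℝ) → ℝ) (x : Fin n → ℝ) : Fin n → ℝ :=
  fun i => fderiv ℝ f x (Pi.single i 1)

noncomputable def hess {n : ℕ} (f : (Fin n → ℝ) → ℝ) (x : Fin n → ℝ) :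
    Matrix (Fin n) (Fin n) ℝ :=
  Matrix.of fun i j =>
    fderiv ℝ (fun y => fderiv ℝ f y (Pi.single j 1)) x (Pi.single i 1)

noncomputable def qhat {d l : ℕ} (f : (Fin d → ℝ) → ℝ) (x : Fin d → ℝ)
    (S : Matrix (Fin l) (Fin d) ℝ) (s : Fin l → ℝ) : ℝ :=
  f x + (∑ i, S.mulVec (grad f x) i * s i)
    + (1/2) * (∑ i, s i * (S * hess f x * S.transpose).mulVec s i)

noncomputable def mhat {d l : ℕ} (f : (Fin d → ℝ) → ℝ) (x : Fin d → ℝ)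
    (S : Matrix (Fin l) (Fin d) ℝ) (α : ℝ) (s : Fin l → ℝ) : ℝ :=
  qhat f x S s + (1/(3*α)) * enorm (S.transpose.mulVec s) ^ 3

noncomputable def lambdaMin {n : ℕ} (A : Matrix (Fin n) (Fin n) ℝ) : ℝ :=
  sInf {t : ℝ | ∃ v : Fin n → ℝ, enorm v = 1 ∧ t = ∑ i, v i * A.mulVec v i}

def LipschitzHessian {n : ℕ} (f : (Fin n → ℝ) → ℝ) (L : ℝ) : Prop :=
  ∀ x y : Fin n → ℝ, opNorm (hess f y - hess f x) ≤ L * enorm (y - x)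

noncomputable def augM {d : ℕ} (f : (Fin d → ℝ) → ℝ) (x : Fin d → ℝ) :
    Matrix (Fin d) (Fin (d+1)) ℝ :=
  Matrix.of fun i j => Fin.cases (grad f x i) (fun j' => hess f x i j') j

noncomputable def gaussVec (l : ℕ) : Measure (Fin l → ℝ) :=
  Measure.pi fun _ => gaussianReal 0 (l : ℝ≥0)⁻¹

noncomputable def scaledGaussian (l d : ℕ) : Measure (Fin l → Fin d → ℝ) :=
  Measure.pi fun _ : Fin l => Measure.pi fun _ : Fin d => gaussianReal 0 (l : ℝ≥0)⁻¹


theorem enorm_nonneg' {n : ℕ} (v : Fin n → ℝ) : 0 ≤ enorm v := Real.sqrt_nonneg _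

theorem enorm_sq' {n : ℕ} (v : Fin n → ℝ) : enorm v ^ 2 = ∑ i, v i ^ 2 :=
  Real.sq_sqrt (Finset.sum_nonneg fun i _ => sq_nonneg _)

theorem cs' {n : ℕ} (u v : Fin n → ℝ) : (∑ i, u i * v i) ^ 2 ≤ enorm u ^ 2 * enorm v ^ 2 := by
  rw [enorm_sq', enorm_sq']
  exact Finset.sum_mul_sq_le_sq_mul_sq _ _ _

theorem enorm_smul' {n : ℕ} (c : ℝ) (hc : 0 ≤ c) (v : Fin n → ℝ) :
    enorm (c • v) = c * enorm v := by
  have h : enorm (c • v) ^ 2 = (c * enorm v) ^ 2 := by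
    rw [mul_pow, enorm_sq', enorm_sq', Finset.mul_sum]
    simp [mul_pow]
  exact (pow_left_inj₀ (enorm_nonneg' _) (mul_nonneg hc (enorm_nonneg' _)) two_ne_zero).1 h

theorem frob' {m n : ℕ} (S : Matrix (Fin m) (Fin n) ℝ) (v : Fin n → ℝ) :
    enorm (S.mulVec v) ^ 2 ≤ (∑ i, enorm (S i) ^ 2) * enorm v ^ 2 := by
  rw [enorm_sq' (S.mulVec v), Finset.sum_mul]
  exact Finset.sum_le_sum fun i _ => cs' (S i) v

theorem le_opNorm' {m n : ℕ} (S : Matrix (Fin m) (Fin n) ℝ) (v : Fin n → ℝ) :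
    enorm (S.mulVec v) ≤ opNorm S * enorm v := by
  rcases (enorm_nonneg' v).eq_or_lt with h | h
  · have := frob' S v
    rw [← h] at this ⊢
    nlinarith [enorm_nonneg' (S.mulVec v)]
  · have hb : BddAbove {c : ℝ | ∃ v : Fin n → ℝ, enorm v = 1 ∧ c = enorm (S.mulVec v)} := by
      refine ⟨Real.sqrt (∑ i, enorm (S i) ^ 2), ?_⟩
      rintro c ⟨w, hw, rfl⟩
      apply Real.le_sqrt_of_sq_le
      simpa [hw] using frob' S w
    have h1 : enorm (S.mulVec ((enorm v)⁻¹ • v)) ≤ opNorm S := by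
      refine le_csSup hb ⟨_, ?_, rfl⟩
      rw [enorm_smul' _ (by positivity)]
      field_simp
    rw [Matrix.mulVec_smul, enorm_smul' _ (by positivity), inv_mul_le_iff₀ h] at h1
    linarith

theorem adj' {m n : ℕ} (S : Matrix (Fin m) (Fin n) ℝ) (v : Fin n → ℝ) (y : Fin m → ℝ) :
    ∑ i, S.mulVec v i * y i = ∑ i, v i * S.transpose.mulVec y i := by
  change S.mulVec v ⬝ᵥ y = v ⬝ᵥ S.transpose.mulVec y
  rw [Matrix.mulVec_transpose, dotProduct_comm, Matrix.dotProduct_mulVec, dotProduct_comm]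

theorem stmt10 {d l : ℕ} (H : Matrix (Fin d) (Fin d) ℝ) (hH : H.IsSymm)
    (S : Matrix (Fin l) (Fin d) ℝ) (sh : Fin l → ℝ)
    (hs : S.transpose.mulVec sh ≠ 0)
    (α κ_S S_max ε_H : ℝ) (hα : 0 < α) (hκ : 0 ≤ κ_S) (hSmax : 0 < S_max)
    (hεH : 0 < ε_H)
    (ha : opNorm S ≤ S_max)
    (hb : lambdaMin (S * H * S.transpose) < -ε_H)
    (hc : ∀ y : Fin l → ℝ,
      (∑ i, y i * (S * H * S.transpose).mulVec y i)
        + (1/α) * ((enorm (S.transpose.mulVec sh))⁻¹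
              * (∑ i, (S * S.transpose).mulVec sh i * y i) ^ 2
            + enorm (S.transpose.mulVec sh) * enorm (S.transpose.mulVec y) ^ 2)
        ≥ -κ_S * enorm (S.transpose.mulVec sh) * enorm y ^ 2) :
    enorm (S.transpose.mulVec sh) ≥ ε_H * (2 * S_max ^ 2 / α + κ_S)⁻¹ := by
  obtain ⟨t, ⟨y, hy, rfl⟩, hlt⟩ : ∃ t ∈ {t : ℝ | ∃ v : Fin l → ℝ, enorm v = 1 ∧
      t = ∑ i, v i * (S * H * S.transpose).mulVec v i}, t < -ε_H := by
    refine exists_lt_of_csInf_lt ?_ hb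
    by_contra hne
    rw [Set.not_nonempty_iff_eq_empty] at hne
    rw [lambdaMin, hne, Real.sInf_empty] at hb
    linarith
  have h := hc y
  have hE : 0 < enorm (S.transpose.mulVec sh) := by
    refine (enorm_nonneg' _).lt_of_ne' fun h0 => hs ?_
    have h1 := enorm_sq' (S.transpose.mulVec sh)
    rw [h0] at h1
    funext i
    have h2 := (Finset.sum_eq_zero_iff_of_nonneg (fun i _ => sq_nonneg _)).1
      (h1.symm.trans (by norm_num)) i (Finset.mem_univ i)
    simpa using h2
  have hcs := cs' (S.transpose.mulVec sh) (S.transpose.mulVec y)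
  rw [← adj', Matrix.mulVec_mulVec] at hcs
  -- bound on the transpose
  have hT : enorm (S.transpose.mulVec y) ^ 2 ≤ S_max ^ 2 := by
    have h1 := cs' (S.mulVec (S.transpose.mulVec y)) y
    have h2 : ∑ i, S.mulVec (S.transpose.mulVec y) i * y i
        = enorm (S.transpose.mulVec y) ^ 2 := by
      rw [adj', enorm_sq']
      simp [sq]
    have h3 := le_opNorm' S (S.transpose.mulVec y)
    have hn := enorm_nonneg' (S.transpose.mulVec y)
    have h4 := h3.trans (mul_le_mul_of_nonneg_right ha hn)
    have h5 := pow_le_pow_left₀ (enorm_nonneg' _) h4 2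
    rw [h2, hy] at h1
    rcases hn.eq_or_lt with h0 | h0
    · rw [← h0]; nlinarith
    · have h6 : 0 < enorm (S.transpose.mulVec y) ^ 2 := by positivity
      nlinarith
  rw [hy] at h
  generalize enorm (S.transpose.mulVec sh) = E at *
  generalize enorm (S.transpose.mulVec y) ^ 2 = T at *
  generalize (∑ i, (S * S.transpose).mulVec sh i * y i) ^ 2 = P at *
  have h1 : E⁻¹ * P ≤ E * T := by
    rw [inv_mul_le_iff₀ hE]; linarith
  have h2 : E⁻¹ * P + E * T ≤ 2 * E * S_max ^ 2 := by nlinarith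
  have h3 := mul_le_mul_of_nonneg_left h2 (by positivity : 0 ≤ 1 / α)
  have h4 : 1 / α * (2 * E * S_max ^ 2) = E * (2 * S_max ^ 2 / α) := by ring
  rw [ge_iff_le, ← div_eq_mul_inv, div_le_iff₀ (by positivity)]
  nlinarith

end RARC
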